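/- Let G be a finite DAG with unique source s and unique sink t whose every arc lies on some s-t path. The unique multilinear polynomial representing DAG-Connectivity on G is p_G(x) = ∑_{H ∈ U(P_G), H ≠ ∅} (−1)^{D(H)} ∏_{e ∈ H} x_e, where D(H) = |H| − |V(H)∖{s,t}| − 1. -/

import Mathlib

/-- `l` is a directed path from `s` to `t` in the graph with arc set `E`,
source map `src` and target map `tgt`, given as a nonempty list of consecutive arcs. -/
def IsPathFrom {V E : Type} (src tgt : E → V) (s t : V) (l : List E) : Prop :=
  l ≠ [] ∧ (∀ e ∈ l.head?, src e = s) ∧ (∀ e ∈ l.getLast?, tgt e = t) ∧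
    l.Chain' (fun e f => tgt e = src f)

/-- The arc sets of directed paths from `s` to `t`. -/
def pathEdgeSets {V E : Type} [DecidableEq E] (src tgt : E → V) (s t : V) :
    Set (Finset E) :=
  {P | ∃ l : List E, IsPathFrom src tgt s t l ∧ l.Nodup ∧ P = l.toFinset}

/-- The arc sets which are unions of arc sets of `s`-`t` paths. -/
def unionOfPaths {V E : Type} [DecidableEq E] (src tgt : E → V) (s t : V) :
    Set (Finset E) :=
  {H | ∃ Ps : Set (Finset E), Ps ⊆ pathEdgeSets src tgt s t ∧ (H : Set E) = ⋃ p ∈ Ps, (p : Set E)}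

/-- The graph is acyclic: no directed cycles. -/
def IsAcyclicDigraph {V E : Type} (src tgt : E → V) : Prop :=
  ∀ v : V, ¬ Relation.TransGen (fun a b => ∃ e, src e = a ∧ tgt e = b) v v

/-- `s` is the unique source: exactly the vertices with no incoming arc are `s`. -/
def IsUniqueSource {V E : Type} (src tgt : E → V) (s : V) : Prop :=
  ∀ v : V, (¬ ∃ e, tgt e = v) ↔ v = s

/-- `t` is the unique sink: exactly the vertices with no outgoing arc are `t`. -/
def IsUniqueSink {V E : Type} (src tgt : E → V) (t : V) : Prop :=
  ∀ v : V, (¬ ∃ e, src e = v) ↔ v = t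

open Classical in
/-- The set of unit `s`-`t` flows supported on `K`. -/
noncomputable def flowSet {V E : Type} [Fintype E] (src tgt : E → V) (s t : V)
    (K : Set E) : Set (E → ℝ) :=
  {f | (∀ e, 0 ≤ f e) ∧ (∀ e, e ∉ K → f e = 0) ∧
    (∑ e ∈ Finset.univ.filter (fun e => src e = s), f e = 1) ∧
    ∀ v : V, v ≠ s → v ≠ t →
      ∑ e ∈ Finset.univ.filter (fun e => tgt e = v), f e =
        ∑ e ∈ Finset.univ.filter (fun e => src e = v), f e}

open Classical in
/-- `D(K) = |K| - |V(K) \ {s,t}| - 1` where `V(K)` is the set of endpoints of arcs of `K`. -/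
noncomputable def Dval {V E : Type} [Fintype V] [DecidableEq E] (src tgt : E → V)
    (s t : V) (K : Finset E) : ℤ :=
  (K.card : ℤ) - ((K.image src ∪ K.image tgt) \ {s, t}).card - 1

/-!
Call `H` balanced at `v` if `H` enters `v` exactly when it leaves `v`. If the graph is acyclic and
has an `s`-`t` path, the unions of `s`-`t` paths are the arc sets balanced at every `v ∉ {s, t}`:
a maximal chain of arcs inside such a set can only start and stop at `s` or `t`, and unless it runs
from `s` to `t` it closes a cycle, possibly together with the given `s`-`t` path.

Let `X` be the set of arcs with `x e = 1`. If `X` contains no `s`-`t` path, every term vanishes.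
Otherwise, note that at each vertex the sign `-1` (visited), `1` (avoided) or `0` (unbalanced)
equals `[H does not enter v] - [H leaves v]`. Expanding the product of these differences turns
`∑ (-1) ^ D(H)`, over the unions of paths inside `X`, into a sum over the vertex sets `A` avoiding
`s` and `t` which records only arcs into `A` and arcs out of the complement of `A ∪ {s, t}`. An
`s`-`t` path inside `X` has an arc from `A ∪ {s}` to its complement; adding or removing this arc is
not recorded but flips `(-1) ^ |H|`, so the sum is `0`. Its term at `H = ∅` is `-1`, hence the
remaining terms add up to `1`.
-/

section Paths

variable {V E : Type} {src tgt : E → V} {s t : V}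

lemma isPathFrom_iff {l : List E} :
    IsPathFrom src tgt s t l ↔ l ≠ [] ∧ (∀ e ∈ l.head?, src e = s) ∧
      (∀ e ∈ l.getLast?, tgt e = t) ∧ l.IsChain fun e f => tgt e = src f :=
  Iff.rfl

lemma isPathFrom_cons {e : E} {l : List E} :
    IsPathFrom src tgt s t (e :: l) ↔
      src e = s ∧ (l = [] ∧ tgt e = t ∨ IsPathFrom src tgt (tgt e) t l) := by
  cases l <;> simp [isPathFrom_iff, eq_comm, and_left_comm]

lemma IsPathFrom.transGen {l : List E} (hl : IsPathFrom src tgt s t l) :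
    Relation.TransGen (fun a b => ∃ e, src e = a ∧ tgt e = b) s t := by
  induction l generalizing s with
  | nil => exact absurd rfl hl.1
  | cons e l ih =>
    obtain ⟨rfl, ⟨-, rfl⟩ | hl⟩ := isPathFrom_cons.1 hl
    · exact .single ⟨e, rfl, rfl⟩
    · exact .head ⟨e, rfl, rfl⟩ (ih hl)

lemma IsPathFrom.exists_mem_leaving {l : List E} (hl : IsPathFrom src tgt s t l) {S : Set V}
    (hs : s ∈ S) (ht : t ∉ S) : ∃ e ∈ l, src e ∈ S ∧ tgt e ∉ S := by
  induction l generalizing s with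
  | nil => exact absurd rfl hl.1
  | cons e l ih =>
    by_cases he : tgt e ∈ S
    · obtain ⟨rfl, ⟨-, rfl⟩ | hl⟩ := isPathFrom_cons.1 hl
      · exact absurd he ht
      · obtain ⟨f, hf, hfS⟩ := ih hl he
        exact ⟨f, List.mem_cons_of_mem e hf, hfS⟩
    · exact ⟨e, List.mem_cons_self, (isPathFrom_cons.1 hl).1 ▸ hs, he⟩

lemma IsPathFrom.exists_src_eq {l : List E} (hl : IsPathFrom src tgt s t l) {e : E} (he : e ∈ l)
    (het : tgt e ≠ t) : ∃ f ∈ l, src f = tgt e := by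
  obtain ⟨i, hi, rfl⟩ := List.getElem_of_mem he
  have hi_succ : i + 1 < l.length := by
    by_contra hlast
    refine het (hl.2.2.1 _ ?_)
    rw [List.getLast?_eq_getElem?, show l.length - 1 = i by lia]
    exact List.getElem?_eq_getElem hi
  exact ⟨l[i + 1], List.getElem_mem _, (List.isChain_iff_getElem.1 hl.2.2.2 i hi_succ).symm⟩

lemma IsPathFrom.exists_tgt_eq {l : List E} (hl : IsPathFrom src tgt s t l) {e : E} (he : e ∈ l)
    (hes : src e ≠ s) : ∃ f ∈ l, tgt f = src e := by
  obtain ⟨i, hi, rfl⟩ := List.getElem_of_mem he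
  cases i with
  | zero => exact absurd (hl.2.1 _ (by simp [List.head?_eq_getElem?])) hes
  | succ j => exact ⟨l[j], List.getElem_mem _, List.isChain_iff_getElem.1 hl.2.2.2 j hi⟩

lemma mem_unionOfPaths_iff [DecidableEq E] {H : Finset E} :
    H ∈ unionOfPaths src tgt s t ↔
      ∀ e ∈ H, ∃ p ∈ pathEdgeSets src tgt s t, e ∈ p ∧ p ⊆ H := by
  constructor
  · rintro ⟨Ps, hPs, hH⟩ e he
    obtain ⟨p, hp, hep⟩ := Set.mem_iUnion₂.1 (hH ▸ Finset.mem_coe.2 he)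
    refine ⟨p, hPs hp, hep, Finset.coe_subset.1 ?_⟩
    exact hH ▸ Set.subset_biUnion_of_mem (u := fun q : Finset E => (q : Set E)) hp
  · intro hH
    refine ⟨{p | p ∈ pathEdgeSets src tgt s t ∧ p ⊆ H}, fun p hp => hp.1, ?_⟩
    refine Set.Subset.antisymm (fun e he => ?_) (Set.iUnion₂_subset fun p hp => hp.2)
    obtain ⟨p, hp, hep, hpH⟩ := hH e he
    exact Set.mem_biUnion (show p ∈ {p | _ ∧ _} from ⟨hp, hpH⟩) hep

end Paths

/-- The arc set `H` is balanced at the vertex `v` if it enters `v` exactly when it leaves `v`. This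
is flow conservation at `v`, recorded only at the level of supports. -/
def IsBalancedAt {V E : Type*} (src tgt : E → V) (H : Finset E) (v : V) : Prop :=
  (∃ e ∈ H, tgt e = v) ↔ ∃ e ∈ H, src e = v

section Acyclic

variable {V E : Type} {src tgt : E → V} {s t : V}

lemma isBalancedAt_of_mem_unionOfPaths [DecidableEq E] {H : Finset E}
    (hH : H ∈ unionOfPaths src tgt s t) {v : V} (hvs : v ≠ s) (hvt : v ≠ t) :
    IsBalancedAt src tgt H v := by
  constructor <;> rintro ⟨e, he, rfl⟩ <;>
    obtain ⟨_, ⟨l, hl, -, rfl⟩, hel, hlH⟩ := mem_unionOfPaths_iff.1 hH e he <;>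
    rw [List.mem_toFinset] at hel
  · obtain ⟨f, hf, hfe⟩ := hl.exists_src_eq hel hvt
    exact ⟨f, hlH (List.mem_toFinset.2 hf), hfe⟩
  · obtain ⟨f, hf, hfe⟩ := hl.exists_tgt_eq hel hvs
    exact ⟨f, hlH (List.mem_toFinset.2 hf), hfe⟩

namespace IsAcyclicDigraph

lemma nodup_of_isChain (hacyc : IsAcyclicDigraph src tgt) {l : List E}
    (hl : l.IsChain fun e f => tgt e = src f) : l.Nodup := by
  have hpair : l.Pairwise (Relation.TransGen fun e f => tgt e = src f) :=
    List.isChain_iff_pairwise.1 (hl.imp fun _ _ => .single)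
  refine hpair.imp ?_
  rintro e _ hee rfl
  exact hacyc (src e) (hee.lift src fun a _ hab => ⟨a, rfl, hab⟩)

lemma exists_maximal_isChain (hacyc : IsAcyclicDigraph src tgt) {H : Finset E} {e : E}
    (he : e ∈ H) :
    ∃ l : List E, l.IsChain (fun e f => tgt e = src f) ∧ e ∈ l ∧ (∀ f ∈ l, f ∈ H) ∧
      (∀ a ∈ l.head?, ∀ f ∈ H, tgt f ≠ src a) ∧ ∀ b ∈ l.getLast?, ∀ f ∈ H, src f ≠ tgt b := by
  let chains : Set (List E) :=
    {l | l.IsChain (fun e f => tgt e = src f) ∧ e ∈ l ∧ ∀ f ∈ l, f ∈ H}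
  have hfin : (List.length '' chains).Finite := by
    classical
    refine (Set.finite_Iic H.card).subset ?_
    rintro _ ⟨l, ⟨hchain, -, hlH⟩, rfl⟩
    rw [← List.toFinset_card_of_nodup (hacyc.nodup_of_isChain hchain)]
    exact Finset.card_le_card fun f hf => hlH f (List.mem_toFinset.1 hf)
  obtain ⟨l, ⟨hchain, hel, hlH⟩, hmax⟩ :=
    hfin.exists_maximalFor' List.length chains ⟨[e], by simp [chains, he]⟩
  refine ⟨l, hchain, hel, hlH, fun a ha f hf hfa => ?_, fun b hb f hf hbf => ?_⟩
  · have hlonger : f :: l ∈ chains :=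
      ⟨List.isChain_cons.2 ⟨fun b hb => Option.mem_unique ha hb ▸ hfa, hchain⟩,
        List.mem_cons_of_mem f hel, by simpa [hf] using hlH⟩
    simpa using hmax hlonger
  · have hlonger : l ++ [f] ∈ chains :=
      ⟨List.isChain_append.2 ⟨hchain, by simp, by grind⟩, by simp [hel], by grind⟩
    simpa using hmax hlonger

lemma exists_isPathFrom_of_isBalancedAt (hacyc : IsAcyclicDigraph src tgt)
    (hst : ∃ l, IsPathFrom src tgt s t l) {H : Finset E}
    (hH : ∀ v, v ≠ s → v ≠ t → IsBalancedAt src tgt H v) {e : E} (he : e ∈ H) :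
    ∃ l, IsPathFrom src tgt s t l ∧ e ∈ l ∧ ∀ f ∈ l, f ∈ H := by
  obtain ⟨l, hchain, hel, hlH, hfirst, hlast⟩ := hacyc.exists_maximal_isChain he
  have hne : l ≠ [] := List.ne_nil_of_mem hel
  have hsrc : src (l.head hne) = s ∨ src (l.head hne) = t := by
    by_contra! h
    obtain ⟨f, hf, hfa⟩ := (hH _ h.1 h.2).2 ⟨_, hlH _ (l.head_mem hne), rfl⟩
    exact hfirst _ (List.head_mem_head? hne) f hf hfa
  have htgt : tgt (l.getLast hne) = s ∨ tgt (l.getLast hne) = t := by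
    by_contra! h
    obtain ⟨f, hf, hfb⟩ := (hH _ h.1 h.2).1 ⟨_, hlH _ (l.getLast_mem hne), rfl⟩
    exact hlast _ (List.getLast_mem_getLast? hne) f hf hfb
  have hpath : IsPathFrom src tgt (src (l.head hne)) (tgt (l.getLast hne)) l :=
    ⟨hne, by simp [List.head?_eq_some_head hne], by simp [List.getLast?_eq_some_getLast hne],
      hchain⟩
  obtain ⟨l', hl'⟩ := hst
  rcases hsrc with hsrc | hsrc <;> rcases htgt with htgt | htgt <;> rw [hsrc, htgt] at hpath
  · exact absurd hpath.transGen (hacyc s)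
  · exact ⟨l, hpath, hel, hlH⟩
  · exact absurd (hl'.transGen.trans hpath.transGen) (hacyc s)
  · exact absurd hpath.transGen (hacyc t)

lemma mem_unionOfPaths_iff_isBalancedAt [DecidableEq E]
    (hacyc : IsAcyclicDigraph src tgt) (hst : ∃ l, IsPathFrom src tgt s t l) {H : Finset E} :
    H ∈ unionOfPaths src tgt s t ↔ ∀ v, v ≠ s → v ≠ t → IsBalancedAt src tgt H v := by
  refine ⟨fun hH _ => isBalancedAt_of_mem_unionOfPaths hH,
    fun hH => mem_unionOfPaths_iff.2 fun e he => ?_⟩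
  obtain ⟨l, hl, hel, hlH⟩ := hacyc.exists_isPathFrom_of_isBalancedAt hst hH he
  exact ⟨l.toFinset, ⟨l, hl, hacyc.nodup_of_isChain hl.2.2.2, rfl⟩, List.mem_toFinset.2 hel,
    fun f hf => hlH f (List.mem_toFinset.1 hf)⟩

end IsAcyclicDigraph

end Acyclic

lemma sum_powerset_neg_one_pow_card_mul_eq_zero {ι R : Type*} [DecidableEq ι] [Ring R]
    {X : Finset ι} {e : ι} (he : e ∈ X) (φ : Finset ι → R)
    (hφ : ∀ H, e ∉ H → φ (insert e H) = φ H) :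
    ∑ H ∈ X.powerset, (-1) ^ H.card * φ H = 0 := by
  rw [← Finset.insert_erase he, Finset.sum_powerset_insert (Finset.notMem_erase e X),
    ← Finset.sum_add_distrib]
  refine Finset.sum_eq_zero fun H hH => ?_
  have heH : e ∉ H := fun h => Finset.notMem_erase e X (Finset.mem_powerset.1 hH h)
  rw [hφ H heH, Finset.card_insert_of_notMem heH, pow_succ, mul_neg_one, neg_mul, add_neg_cancel]

section AlternatingSum

variable {V E : Type*} {src tgt : E → V}

open Classical in
lemma ite_isBalancedAt_eq_add {R : Type*} [Ring R] (H : Finset E) (v : V) :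
    (if IsBalancedAt src tgt H v then
      if v ∈ H.image src ∪ H.image tgt then (-1 : R) else 1 else 0) =
      (if ∃ e ∈ H, tgt e = v then 0 else 1) + if ∃ e ∈ H, src e = v then -1 else 0 := by
  simp only [IsBalancedAt, Finset.mem_union, Finset.mem_image]
  by_cases htgt : ∃ e ∈ H, tgt e = v <;> by_cases hsrc : ∃ e ∈ H, src e = v <;>
    simp [htgt, hsrc]

open Classical in
lemma ite_forall_isBalancedAt_eq_sum {R : Type*} [CommRing R] (W : Finset V) (H : Finset E) :
    (if ∀ v ∈ W, IsBalancedAt src tgt H v then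
      (-1 : R) ^ (W ∩ (H.image src ∪ H.image tgt)).card else 0) =
      ∑ A ∈ W.powerset, (∏ v ∈ A, if ∃ e ∈ H, tgt e = v then 0 else 1) *
        ∏ v ∈ W \ A, if ∃ e ∈ H, src e = v then -1 else 0 := by
  rw [← Finset.prod_add, ← Finset.prod_const, ← Finset.prod_ite_mem, ← Finset.prod_ite_zero]
  exact Finset.prod_congr rfl fun v _ => ite_isBalancedAt_eq_add H v

open Classical in
lemma sum_isBalancedAt_neg_one_pow_eq_zero {R : Type*} [CommRing R] {W : Finset V} {X : Finset E}
    (hcut : ∀ A ⊆ W, ∃ e ∈ X, src e ∉ W \ A ∧ tgt e ∉ A) :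
    ∑ H ∈ X.powerset with ∀ v ∈ W, IsBalancedAt src tgt H v,
      (-1 : R) ^ H.card * (-1) ^ (W ∩ (H.image src ∪ H.image tgt)).card = 0 := by
  simp only [Finset.sum_filter, ← mul_ite_zero, ite_forall_isBalancedAt_eq_sum, Finset.mul_sum]
  rw [Finset.sum_comm]
  refine Finset.sum_eq_zero fun A hA => ?_
  obtain ⟨e, he, hsrc, htgt⟩ := hcut A (Finset.mem_powerset.1 hA)
  refine sum_powerset_neg_one_pow_card_mul_eq_zero he _ fun H _ => ?_
  congr 1 <;> refine Finset.prod_congr rfl fun v hv => ?_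
  · simp [ne_of_mem_of_not_mem hv htgt |>.symm]
  · simp [ne_of_mem_of_not_mem hv hsrc |>.symm]

end AlternatingSum

section Connectivity

variable {V E : Type} [Fintype V] [DecidableEq E] {src tgt : E → V} {s t : V}

open Classical in
lemma neg_one_zpow_Dval {K : Type*} [DivisionRing K] (H : Finset E) :
    (-1 : K) ^ Dval src tgt s t H =
      -((-1) ^ H.card * (-1) ^ ({s, t}ᶜ ∩ (H.image src ∪ H.image tgt)).card) := by
  have hm : (-1 : K) ≠ 0 := neg_ne_zero.2 one_ne_zero
  rw [Dval, zpow_sub₀ hm, zpow_sub₀ hm, zpow_natCast, zpow_natCast, zpow_one, Finset.inter_comm,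
    ← Finset.sdiff_eq_inter_compl, div_neg, div_one, div_eq_mul_inv, ← inv_pow, inv_neg_one]

open Classical in
lemma sum_unionOfPaths_neg_one_zpow_Dval_eq_zero {K : Type*} [Field K]
    (hacyc : IsAcyclicDigraph src tgt) {l : List E} (hl : IsPathFrom src tgt s t l) {X : Finset E}
    (hlX : ∀ e ∈ l, e ∈ X) :
    ∑ H ∈ X.powerset with H ∈ unionOfPaths src tgt s t, (-1 : K) ^ Dval src tgt s t H = 0 := by
  have hne : t ≠ s := fun h => hacyc s (h ▸ hl.transGen)
  have hcut : ∀ A ⊆ ({s, t}ᶜ : Finset V), ∃ e ∈ X, src e ∉ {s, t}ᶜ \ A ∧ tgt e ∉ A := by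
    intro A hA
    have htA : t ∉ A := fun h => by simpa using hA h
    obtain ⟨e, he, hsrc, htgt⟩ :=
      hl.exists_mem_leaving (S := insert s ↑A) (by simp) (by simp [hne, htA])
    exact ⟨e, hlX e he, by aesop, fun h => htgt (.inr h)⟩
  have hbal : ∀ H, H ∈ unionOfPaths src tgt s t ↔
      ∀ v ∈ ({s, t}ᶜ : Finset V), IsBalancedAt src tgt H v := fun H => by
    simp [hacyc.mem_unionOfPaths_iff_isBalancedAt ⟨l, hl⟩]
  simp only [hbal, neg_one_zpow_Dval, Finset.sum_neg_distrib, neg_eq_zero]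
  convert sum_isBalancedAt_neg_one_pow_eq_zero hcut

open Classical in
theorem stmt12_general [Fintype E] {K : Type*} [Field K] (hacyc : IsAcyclicDigraph src tgt)
    (x : E → Bool) :
    (if ∃ p ∈ pathEdgeSets src tgt s t, ∀ e ∈ p, x e = true then (1 : K) else 0) =
      ∑ H ∈ (Finset.univ.filter (fun H : Finset E => H ∈ unionOfPaths src tgt s t)).erase ∅,
        (-1 : K) ^ (Dval src tgt s t H) * ∏ e ∈ H, (if x e = true then (1 : K) else 0) := by
  simp only [Finset.prod_ite_zero, Finset.prod_const_one]
  split_ifs with hpath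
  · obtain ⟨_, ⟨l, hl, -, rfl⟩, hlx⟩ := hpath
    have hsum := sum_unionOfPaths_neg_one_zpow_Dval_eq_zero (K := K) hacyc hl
      (X := {e | x e = true}) (by simpa using hlx)
    have hempty : ∅ ∈ Finset.univ.filter (fun H : Finset E => H ∈ unionOfPaths src tgt s t) := by
      simp [mem_unionOfPaths_iff]
    have hpowerset : (Finset.univ.filter fun e => x e = true).powerset =
        Finset.univ.filter (fun H : Finset E => ∀ e ∈ H, x e = true) := by
      ext H
      simp [Finset.subset_iff]
    rw [hpowerset, Finset.filter_comm, Finset.sum_filter, ← Finset.add_sum_erase _ _ hempty] at hsum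
    simp only [mul_ite, mul_one, mul_zero]
    simpa [Dval, neg_add_eq_zero] using hsum
  · refine (Finset.sum_eq_zero fun H hH => ?_).symm
    obtain ⟨hne, hH⟩ := Finset.mem_erase.1 hH
    obtain ⟨e, he⟩ := Finset.nonempty_iff_ne_empty.2 hne
    obtain ⟨p, hp, -, hpH⟩ := mem_unionOfPaths_iff.1 (Finset.mem_filter.1 hH).2 e he
    rw [if_neg fun hHx => hpath ⟨p, hp, fun f hf => hHx f (hpH hf)⟩, mul_zero]

end Connectivity

open Classical in
/-- The unique multilinear polynomial representing `DAG-Connectivity` on a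
finite DAG (unique source `s`, unique sink `t`, every arc on some `s`-`t` path)
is `p_G(x) = ∑_{∅ ≠ H ∈ U(P_G)} (-1)^{D(H)} ∏_{e ∈ H} x_e`. -/
theorem stmt12 (V E : Type) [Fintype V] [Fintype E] [DecidableEq E]
    (src tgt : E → V) (s t : V)
    (hacyc : IsAcyclicDigraph src tgt)
    (hs : IsUniqueSource src tgt s) (ht : IsUniqueSink src tgt t)
    (hcover : ∀ e : E, ∃ p ∈ pathEdgeSets src tgt s t, e ∈ p) :
    ∀ x : E → Bool,
      (if ∃ p ∈ pathEdgeSets src tgt s t, ∀ e ∈ p, x e = true then (1 : ℝ) else 0) =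
        ∑ H ∈ (Finset.univ.filter
            (fun H : Finset E => H ∈ unionOfPaths src tgt s t)).erase ∅,
          (-1 : ℝ) ^ (Dval src tgt s t H) *
            ∏ e ∈ H, (if x e = true then (1 : ℝ) else 0) :=
  stmt12_general hacyc
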